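/- Linear-time complexity of Memo-la (Theorem 3): For every la-NFA A = (P, Q, q0, F, T), every input string w over Σ, and every position i ∈ {0, …, |w|}, the call Memo-la^{M0}_{A,w}(q0, i) terminates, and the total number of recursive calls it makes is at most #in(A) · |P| · (|w| + 1), where #in(A) = max_{q ∈ P} #in(q); in particular, for a fixed la-NFA A the number of recursive calls is O(|w|). -/

import Mathlib

namespace RegexMemo

/-! ## Generic runs, `φ`, `sub`, `sub*` -/

variable {α : Type}

/-- `φ_s(ℓ, n)`: the index of the result value of the call at index `ℓ`. -/
def phiAux (isRet : α → Bool) (s : List α) (ℓ n : ℕ) : Option ℕ :=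
  match h : s[ℓ]? with
  | none => none
  | some e =>
    if isRet e then
      if n ≤ 1 then some ℓ
      else phiAux isRet s (ℓ + 1) (n - 1)
    else phiAux isRet s (ℓ + 1) (n + 1)
termination_by s.length - ℓ
decreasing_by
  all_goals
    have hl : ℓ < s.length := by
      by_contra hc
      have : s[ℓ]? = none := List.getElem?_eq_none (by omega)
      simp [this] at h
    omega

/-- `φ_s(ℓ) = φ_s(ℓ, 0)`. -/
def phi (isRet : α → Bool) (s : List α) (ℓ : ℕ) : Option ℕ := phiAux isRet s ℓ 0

/-- `sub(s, ℓ)`: replace the memoization-table invocation at index `ℓ` (an element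
`M(q,i)` together with its immediately following result) by `C(q,i)` followed by the
subsequence `s[ℓ'+1] … s[φ_s(ℓ')]`, where `ℓ'` is the first index with `s[ℓ'] = C(q,i)`.
Here `m2c` maps a memoization element `M(q,i)` to the corresponding call element `C(q,i)`
(and everything else to `none`), and `isRet` recognizes result elements. -/
def subExpand [DecidableEq α] (m2c : α → Option α) (isRet : α → Bool)
    (s : List α) (ℓ : ℕ) : Option (List α) :=
  match s[ℓ]? with
  | some e =>
    match m2c e with
    | some c =>
      match s.findIdx? (· == c) with
      | some ℓ' =>
        match phi isRet s ℓ' with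
        | some m =>
          some (s.take ℓ ++ [c] ++ ((s.drop (ℓ' + 1)).take (m - ℓ')) ++ s.drop (ℓ + 2))
        | none => none
      | none => none
    | none => none
  | none => none

/-- `sub*`: repeatedly locate the first memoization element and expand it,
until no memoization element remains. `SubStar m2c isRet s t` means `sub*(s) = t`. -/
inductive SubStar [DecidableEq α] (m2c : α → Option α) (isRet : α → Bool) :
    List α → List α → Prop where
  | done {s : List α} : s.findIdx? (fun e => (m2c e).isSome) = none →
      SubStar m2c isRet s s
  | step {s s' t : List α} {ℓ : ℕ} :
      s.findIdx? (fun e => (m2c e).isSome) = some ℓ →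
      subExpand m2c isRet s ℓ = some s' →
      SubStar m2c isRet s' t →
      SubStar m2c isRet s t

/-- The number of (recursive) calls recorded in a run: the number of `C`/`M` elements. -/
def callCount (isCall : α → Bool) (s : List α) : ℕ := (s.filter isCall).length

variable {Sigma S : Type}

/-- Results of backtracking matching: `SuccessAt i'` or `Failure`. -/
inductive Result : Type where
  | successAt : ℕ → Result
  | failure : Result
deriving DecidableEq

/-! ## Plain NFAs -/

/-- Transitions of a plain NFA. -/
inductive Trans (Sigma S : Type) : Type where
  | eps : S → Trans Sigma S
  | branch : S → S → Trans Sigma S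
  | char : Sigma → S → Trans Sigma S

/-- A (plain) NFA over the alphabet `Sigma` with (finite) state type `S`:
an initial state, a set of accepting states, and a transition function
(whose value is only relevant on non-accepting states). -/
structure NFA (Sigma S : Type) where
  q0 : S
  F : Set S
  T : S → Trans Sigma S

/-- One ε-step: an `Eps` or `Branch` transition of a non-accepting state. -/
def NFA.epsStep (A : NFA Sigma S) (q q' : S) : Prop :=
  q ∉ A.F ∧ (A.T q = Trans.eps q' ∨ (∃ q'', A.T q = Trans.branch q' q'') ∨
    (∃ q'', A.T q = Trans.branch q'' q'))

/-- The NFA has no ε-loops. -/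
def NFA.NoEpsLoops (A : NFA Sigma S) : Prop :=
  ∀ q : S, ¬ Relation.TransGen A.epsStep q q

open Classical in
/-- The in-degree `#in(q)` of a state of a plain NFA. -/
noncomputable def NFA.inDeg [Fintype S] (A : NFA Sigma S) (q : S) : ℕ :=
  (Finset.univ.filter fun q' : S => q' ∉ A.F ∧ A.T q' = Trans.eps q).card +
  (Finset.univ.filter fun q' : S => q' ∉ A.F ∧ ∃ σ, A.T q' = Trans.char σ q).card +
  (Finset.univ.filter fun q' : S => q' ∉ A.F ∧ ∃ q'', A.T q' = Trans.branch q q'').card +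
  (Finset.univ.filter fun q' : S => q' ∉ A.F ∧ ∃ q'', A.T q' = Trans.branch q'' q).card +
  (if q = A.q0 then 1 else 0)

/-- The maximal in-degree `#in(A)` of a plain NFA. -/
noncomputable def NFA.inDegMax [Fintype S] (A : NFA Sigma S) : ℕ :=
  Finset.univ.sup fun q : S => A.inDeg q

/-- Elements of runs of `Match`/`Memo`: calls `C(q,i)`, memoization-table invocations
`M(q,i)`, and results `S(i')` and `F`. -/
inductive RunElem (S : Type) : Type where
  | call : S → ℕ → RunElem S
  | memo : S → ℕ → RunElem S
  | succ : ℕ → RunElem S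
  | fail : RunElem S
deriving DecidableEq

/-- The run element recording the return of a result. -/
def Result.elem {S : Type} : Result → RunElem S
  | .successAt i => .succ i
  | .failure => .fail

def RunElem.isRet : RunElem S → Bool
  | .succ _ => true
  | .fail => true
  | _ => false

def RunElem.isCall : RunElem S → Bool
  | .call _ _ => true
  | .memo _ _ => true
  | _ => false

/-- `M(q,i) ↦ C(q,i)`. -/
def memoToCall : RunElem S → Option (RunElem S)
  | .memo q i => some (.call q i)
  | _ => none

/-- Big-step semantics (together with the produced run) of the backtracking
matching algorithm `Match` for plain NFAs:
`MatchRun A w q i r s` means the call `Match_{A,w}(q, i)` terminates with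
result `r` and produces the run `s`. -/
inductive MatchRun (A : NFA Sigma S) (w : List Sigma) :
    S → ℕ → Result → List (RunElem S) → Prop where
  | accept {q : S} {i : ℕ} : q ∈ A.F →
      MatchRun A w q i (.successAt i) [.call q i, .succ i]
  | eps {q q' : S} {i : ℕ} {r : Result} {s : List (RunElem S)} :
      q ∉ A.F → A.T q = Trans.eps q' →
      MatchRun A w q' i r s →
      MatchRun A w q i r (.call q i :: s ++ [r.elem])
  | branchSucc {q q' q'' : S} {i i' : ℕ} {s : List (RunElem S)} :
      q ∉ A.F → A.T q = Trans.branch q' q'' →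
      MatchRun A w q' i (.successAt i') s →
      MatchRun A w q i (.successAt i') (.call q i :: s ++ [RunElem.succ i'])
  | branchFail {q q' q'' : S} {i : ℕ} {r : Result} {s s' : List (RunElem S)} :
      q ∉ A.F → A.T q = Trans.branch q' q'' →
      MatchRun A w q' i .failure s →
      MatchRun A w q'' i r s' →
      MatchRun A w q i r (.call q i :: s ++ s' ++ [r.elem])
  | charSucc {q q' : S} {σ : Sigma} {i : ℕ} {r : Result} {s : List (RunElem S)} :
      q ∉ A.F → A.T q = Trans.char σ q' →
      w[i]? = some σ →
      MatchRun A w q' (i + 1) r s →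
      MatchRun A w q i r (.call q i :: s ++ [r.elem])
  | charFail {q q' : S} {σ : Sigma} {i : ℕ} :
      q ∉ A.F → A.T q = Trans.char σ q' →
      w[i]? ≠ some σ →
      MatchRun A w q i .failure [.call q i, .fail]

/-- Record `M(q,i) := Failure` in the memoization table if the result is a failure. -/
def recFail [DecidableEq S] (M : S × ℕ → Bool) (q : S) (i : ℕ) : Result → (S × ℕ → Bool)
  | .failure => fun p => if p = (q, i) then true else M p
  | _ => M

/-- Big-step semantics (with resulting memoization table and produced run) of the
memoized backtracking matching algorithm `Memo` for plain NFAs: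
`MemoRun A w q i M M' r s` means the call `Memo^M_{A,w}(q, i)` terminates with result
`r`, final memoization table `M'` (where `M p = true` means `Failure` is recorded at the
key `p`), and produces the run `s`. -/
inductive MemoRun [DecidableEq S] (A : NFA Sigma S) (w : List Sigma) :
    S → ℕ → (S × ℕ → Bool) → (S × ℕ → Bool) → Result → List (RunElem S) → Prop where
  | memoHit {q : S} {i : ℕ} {M : S × ℕ → Bool} : M (q, i) = true →
      MemoRun A w q i M M .failure [.memo q i, .fail]
  | accept {q : S} {i : ℕ} {M : S × ℕ → Bool} : M (q, i) = false → q ∈ A.F →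
      MemoRun A w q i M M (.successAt i) [.call q i, .succ i]
  | eps {q q' : S} {i : ℕ} {M M' : S × ℕ → Bool} {r : Result} {s : List (RunElem S)} :
      M (q, i) = false → q ∉ A.F → A.T q = Trans.eps q' →
      MemoRun A w q' i M M' r s →
      MemoRun A w q i M (recFail M' q i r) r (.call q i :: s ++ [r.elem])
  | branchSucc {q q' q'' : S} {i i' : ℕ} {M M' : S × ℕ → Bool} {s : List (RunElem S)} :
      M (q, i) = false → q ∉ A.F → A.T q = Trans.branch q' q'' →
      MemoRun A w q' i M M' (.successAt i') s →
      MemoRun A w q i M M' (.successAt i') (.call q i :: s ++ [RunElem.succ i'])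
  | branchFail {q q' q'' : S} {i : ℕ} {M M' M'' : S × ℕ → Bool} {r : Result}
      {s s' : List (RunElem S)} :
      M (q, i) = false → q ∉ A.F → A.T q = Trans.branch q' q'' →
      MemoRun A w q' i M M' .failure s →
      MemoRun A w q'' i M' M'' r s' →
      MemoRun A w q i M (recFail M'' q i r) r (.call q i :: s ++ s' ++ [r.elem])
  | charSucc {q q' : S} {σ : Sigma} {i : ℕ} {M M' : S × ℕ → Bool} {r : Result}
      {s : List (RunElem S)} :
      M (q, i) = false → q ∉ A.F → A.T q = Trans.char σ q' →
      w[i]? = some σ →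
      MemoRun A w q' (i + 1) M M' r s →
      MemoRun A w q i M (recFail M' q i r) r (.call q i :: s ++ [r.elem])
  | charFail {q q' : S} {σ : Sigma} {i : ℕ} {M : S × ℕ → Bool} :
      M (q, i) = false → q ∉ A.F → A.T q = Trans.char σ q' →
      w[i]? ≠ some σ →
      MemoRun A w q i M (recFail M q i .failure) .failure [.call q i, .fail]

/-! ## NFAs with sub-automata -/

/-- Kind labels of sub-automaton transitions: positive/negative look-ahead/look-behind
and atomic grouping. -/
inductive Kind : Type where
  | pla | nla | plb | nlb | at
deriving DecidableEq

mutual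
/-- An NFA with sub-automata `⟨Q, q0, F, T⟩`: a list of top-level states, an initial
state, accepting states, and a transition function (relevant on non-accepting top-level
states) whose transitions may be labelled with further NFAs with sub-automata. -/
inductive SubNFA (Sigma S : Type) : Type where
  | mk : List S → S → List S → (S → SubTrans Sigma S) → SubNFA Sigma S

/-- Transitions of an NFA with sub-automata. -/
inductive SubTrans (Sigma S : Type) : Type where
  | eps : S → SubTrans Sigma S
  | branch : S → S → SubTrans Sigma S
  | char : Sigma → S → SubTrans Sigma S
  | sub : Kind → SubNFA Sigma S → S → SubTrans Sigma S
end

/-- Top-level states `Q`. -/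
def SubNFA.Q : SubNFA Sigma S → List S
  | .mk Q _ _ _ => Q

/-- Initial state `q0`. -/
def SubNFA.q0 : SubNFA Sigma S → S
  | .mk _ q0 _ _ => q0

/-- Accepting states `F`. -/
def SubNFA.F : SubNFA Sigma S → List S
  | .mk _ _ F _ => F

/-- Transition function `T`. -/
def SubNFA.T : SubNFA Sigma S → S → SubTrans Sigma S
  | .mk _ _ _ T => T

mutual
/-- All automata occurring within an NFA with sub-automata (including itself), each
together with its nesting depth of atomic grouping (the number of enclosing
`at`-sub-automaton boundaries). -/
def SubNFA.compsD : SubNFA Sigma S → List (SubNFA Sigma S × ℕ)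
  | .mk Q q0 F T => (.mk Q q0 F T, 0) :: Q.flatMap (fun q => SubTrans.subCompsD (T q))

def SubTrans.subCompsD : SubTrans Sigma S → List (SubNFA Sigma S × ℕ)
  | .sub k A' _ => (SubNFA.compsD A').map (fun p => (p.1, p.2 + (if k = Kind.at then 1 else 0)))
  | _ => []
end

/-- All automata occurring within `A` (including `A` itself). -/
def SubNFA.comps (A : SubNFA Sigma S) : List (SubNFA Sigma S) :=
  A.compsD.map Prod.fst

/-- The set (list) of all states `P` occurring within `A`. -/
def SubNFA.allStates (A : SubNFA Sigma S) : List S :=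
  A.comps.flatMap SubNFA.Q

/-- The nesting depth of atomic grouping `ν_A(q)` of a state `q` of `A`. -/
def SubNFA.nu [DecidableEq S] (A : SubNFA Sigma S) (q : S) : ℕ :=
  (A.compsD.map (fun p => if q ∈ p.1.Q then p.2 else 0)).sum

/-- The maximal nesting depth of atomic grouping `ν(A)`. -/
def SubNFA.nuMax [DecidableEq S] (A : SubNFA Sigma S) : ℕ :=
  (A.allStates.map A.nu).foldr max 0

/-- Local wellformedness of one automaton: the initial state is a top-level state,
accepting states are top-level states, and transitions of non-accepting top-level
states lead to top-level states. -/
def SubNFA.LocalOK (B : SubNFA Sigma S) : Prop :=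
  B.q0 ∈ B.Q ∧ (∀ f ∈ B.F, f ∈ B.Q) ∧ ∀ q ∈ B.Q, q ∉ B.F →
    match B.T q with
    | .eps q' => q' ∈ B.Q
    | .branch q' q'' => q' ∈ B.Q ∧ q'' ∈ B.Q
    | .char _ q' => q' ∈ B.Q
    | .sub _ _ q' => q' ∈ B.Q

/-- Wellformedness of an NFA with sub-automata: every component automaton is locally
wellformed, and all the state lists are disjoint and duplicate-free (so that `P` is
the disjoint union of the top-level state sets of all components). -/
def SubNFA.WF (A : SubNFA Sigma S) : Prop :=
  (∀ B ∈ A.comps, B.LocalOK) ∧ A.allStates.Nodup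

/-- The kind labels of all sub-automaton transitions occurring in `A`. -/
def SubNFA.kinds [DecidableEq S] (A : SubNFA Sigma S) : List Kind :=
  A.comps.flatMap fun B =>
    (B.Q.filter (fun q => decide (q ∉ B.F))).filterMap fun q =>
      match B.T q with
      | .sub k _ _ => some k
      | _ => none

/-- A la-NFA: all kind labels are look-around labels (for simplicity, only positive
look-ahead `pla` is treated). -/
def SubNFA.IsLaNFA [DecidableEq S] (A : SubNFA Sigma S) : Prop :=
  ∀ k ∈ A.kinds, k = Kind.pla

/-- An at-NFA: all kind labels are `at` (atomic grouping). -/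
def SubNFA.IsAtNFA [DecidableEq S] (A : SubNFA Sigma S) : Prop :=
  ∀ k ∈ A.kinds, k = Kind.at

/-- A (la,at)-NFA in which (for simplicity) only the kinds `pla` and `at` occur. -/
def SubNFA.IsLaAtNFA [DecidableEq S] (A : SubNFA Sigma S) : Prop :=
  ∀ k ∈ A.kinds, k = Kind.pla ∨ k = Kind.at

/-- One global ε-step of an NFA with sub-automata: an `Eps` or `Branch` transition, or a
`Sub` transition with a look-around kind (from the transition's source to its successor),
of a non-accepting top-level state of any component automaton. -/
def SubNFA.epsStep (A : SubNFA Sigma S) (q q' : S) : Prop :=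
  ∃ B ∈ A.comps, q ∈ B.Q ∧ q ∉ B.F ∧
    (B.T q = SubTrans.eps q' ∨
     (∃ q'', B.T q = SubTrans.branch q' q'') ∨
     (∃ q'', B.T q = SubTrans.branch q'' q') ∨
     (∃ k A'', B.T q = SubTrans.sub k A'' q' ∧ k ≠ Kind.at))

/-- The NFA with sub-automata has no ε-loops. -/
def SubNFA.NoEpsLoops (A : SubNFA Sigma S) : Prop :=
  ∀ q : S, ¬ Relation.TransGen A.epsStep q q

/-- All pairs (state, transition) of non-accepting top-level states of all component
automata of `A`. -/
def SubNFA.allTransNF [DecidableEq S] (A : SubNFA Sigma S) : List (S × SubTrans Sigma S) :=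
  A.comps.flatMap fun B => (B.Q.filter (fun q => decide (q ∉ B.F))).map fun q => (q, B.T q)

/-- How many of the buckets in the definition of the in-degree of `q` a given
transition contributes to. -/
def SubTrans.hits [DecidableEq S] (t : SubTrans Sigma S) (q : S) : ℕ :=
  match t with
  | .eps q' => if q' = q then 1 else 0
  | .char _ q' => if q' = q then 1 else 0
  | .branch q' q'' => (if q' = q then 1 else 0) + (if q'' = q then 1 else 0)
  | .sub _ _ q' => if q' = q then 1 else 0

/-- The in-degree `#in(q)` of a state of an NFA with sub-automata. -/
def SubNFA.inDeg [DecidableEq S] (A : SubNFA Sigma S) (q : S) : ℕ :=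
  (A.allTransNF.map (fun p => p.2.hits q)).sum +
  (if q ∈ A.comps.map SubNFA.q0 then 1 else 0)

/-- The maximal in-degree `#in(A)`. -/
def SubNFA.inDegMax [DecidableEq S] (A : SubNFA Sigma S) : ℕ :=
  (A.allStates.map A.inDeg).foldr max 0

/-! ## run elements for `Memo-la` and `Match-(la,at)` -/

/-- Elements of runs of `Memo-la` (and of `Match-(la,at)`): calls `C(q,i)`,
memoization-table invocations `M(q,i)`, and the results `S(i')`, `S'` (bare success),
and `F`. -/
inductive LaRunElem (S : Type) : Type where
  | call : S → ℕ → LaRunElem S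
  | memo : S → ℕ → LaRunElem S
  | succAt : ℕ → LaRunElem S
  | succ : LaRunElem S
  | fail : LaRunElem S
deriving DecidableEq

def LaRunElem.isRet : LaRunElem S → Bool
  | .succAt _ => true
  | .succ => true
  | .fail => true
  | _ => false

def LaRunElem.isCall : LaRunElem S → Bool
  | .call _ _ => true
  | .memo _ _ => true
  | _ => false

def laMemoToCall : LaRunElem S → Option (LaRunElem S)
  | .memo q i => some (.call q i)
  | _ => none

def Result.laElem {S : Type} : Result → LaRunElem S
  | .successAt i => .succAt i
  | .failure => .fail

/-! ## The backtracking matching algorithm `Match-(la,at)` -/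

/-- Big-step semantics (with produced run) of the backtracking matching algorithm
`Match-(la,at)` for NFAs with sub-automata: `LAMatchRun w A q i r s` means the call
`Match-(la,at)_{A,w}(q, i)` terminates with result `r` and produces the run `s`.
For simplicity, only the look-around kind `pla` (besides `at`) is treated. -/
inductive LAMatchRun (w : List Sigma) :
    SubNFA Sigma S → S → ℕ → Result → List (LaRunElem S) → Prop where
  | accept {A : SubNFA Sigma S} {q : S} {i : ℕ} : q ∈ A.F →
      LAMatchRun w A q i (.successAt i) [.call q i, .succAt i]
  | eps {A : SubNFA Sigma S} {q q' : S} {i : ℕ} {r : Result} {s : List (LaRunElem S)} :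
      q ∉ A.F → A.T q = SubTrans.eps q' →
      LAMatchRun w A q' i r s →
      LAMatchRun w A q i r (.call q i :: s ++ [r.laElem])
  | branchSucc {A : SubNFA Sigma S} {q q' q'' : S} {i i' : ℕ} {s : List (LaRunElem S)} :
      q ∉ A.F → A.T q = SubTrans.branch q' q'' →
      LAMatchRun w A q' i (.successAt i') s →
      LAMatchRun w A q i (.successAt i') (.call q i :: s ++ [LaRunElem.succAt i'])
  | branchFail {A : SubNFA Sigma S} {q q' q'' : S} {i : ℕ} {r : Result}
      {s s' : List (LaRunElem S)} :
      q ∉ A.F → A.T q = SubTrans.branch q' q'' →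
      LAMatchRun w A q' i .failure s →
      LAMatchRun w A q'' i r s' →
      LAMatchRun w A q i r (.call q i :: s ++ s' ++ [r.laElem])
  | charSucc {A : SubNFA Sigma S} {q q' : S} {σ : Sigma} {i : ℕ} {r : Result}
      {s : List (LaRunElem S)} :
      q ∉ A.F → A.T q = SubTrans.char σ q' →
      w[i]? = some σ →
      LAMatchRun w A q' (i + 1) r s →
      LAMatchRun w A q i r (.call q i :: s ++ [r.laElem])
  | charFail {A : SubNFA Sigma S} {q q' : S} {σ : Sigma} {i : ℕ} :
      q ∉ A.F → A.T q = SubTrans.char σ q' →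
      w[i]? ≠ some σ →
      LAMatchRun w A q i .failure [.call q i, .fail]
  | plaSucc {A A' : SubNFA Sigma S} {q q' : S} {i i' : ℕ} {r : Result}
      {s1 s2 : List (LaRunElem S)} :
      q ∉ A.F → A.T q = SubTrans.sub Kind.pla A' q' →
      LAMatchRun w A' A'.q0 i (.successAt i') s1 →
      LAMatchRun w A q' i r s2 →
      LAMatchRun w A q i r (.call q i :: s1 ++ s2 ++ [r.laElem])
  | plaFail {A A' : SubNFA Sigma S} {q q' : S} {i : ℕ} {s1 : List (LaRunElem S)} :
      q ∉ A.F → A.T q = SubTrans.sub Kind.pla A' q' →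
      LAMatchRun w A' A'.q0 i .failure s1 →
      LAMatchRun w A q i .failure (.call q i :: s1 ++ [LaRunElem.fail])
  | atSucc {A A' : SubNFA Sigma S} {q q' : S} {i i' : ℕ} {r : Result}
      {s1 s2 : List (LaRunElem S)} :
      q ∉ A.F → A.T q = SubTrans.sub Kind.at A' q' →
      LAMatchRun w A' A'.q0 i (.successAt i') s1 →
      LAMatchRun w A q' i' r s2 →
      LAMatchRun w A q i r (.call q i :: s1 ++ s2 ++ [r.laElem])
  | atFail {A A' : SubNFA Sigma S} {q q' : S} {i : ℕ} {s1 : List (LaRunElem S)} :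
      q ∉ A.F → A.T q = SubTrans.sub Kind.at A' q' →
      LAMatchRun w A' A'.q0 i .failure s1 →
      LAMatchRun w A q i .failure (.call q i :: s1 ++ [LaRunElem.fail])

/-! ## `Memo-la` -/

/-- Values of the memoization table of `Memo-la`: `Failure` or `Success`. -/
inductive LaVal : Type where
  | success : LaVal
  | failure : LaVal
deriving DecidableEq

/-- Results of `Memo-la`: `SuccessAt i'`, bare `Success`, or `Failure`. -/
inductive LaResult : Type where
  | successAt : ℕ → LaResult
  | success : LaResult
  | failure : LaResult
deriving DecidableEq

def LaVal.toResult : LaVal → LaResult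
  | .success => .success
  | .failure => .failure

def LaResult.elem {S : Type} : LaResult → LaRunElem S
  | .successAt i => .succAt i
  | .success => .succ
  | .failure => .fail

def Result.toLa : Result → LaResult
  | .successAt i => .successAt i
  | .failure => .failure

/-- The final recording of `Memo-la`: `M(q,i) := Success` if the result is
`SuccessAt i'` or `Success`, and `M(q,i) := Failure` if the result is `Failure`. -/
def laRecord [DecidableEq S] (M : S × ℕ → Option LaVal) (q : S) (i : ℕ) (r : LaResult) :
    S × ℕ → Option LaVal :=
  fun p => if p = (q, i) then
    some (match r with | .failure => LaVal.failure | _ => LaVal.success)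
  else M p

/-- Big-step semantics (with resulting memoization table and produced run) of the
memoized backtracking matching algorithm `Memo-la` for la-NFAs:
`MemoLaRun w A q i M M' r s` means the call `Memo-la^M_{A,w}(q, i)` terminates with
result `r`, final memoization table `M'`, and produces the run `s`. The memoization
table is shared between the top-level automaton and all sub-automata. -/
inductive MemoLaRun [DecidableEq S] (w : List Sigma) :
    SubNFA Sigma S → S → ℕ → (S × ℕ → Option LaVal) → (S × ℕ → Option LaVal) →
    LaResult → List (LaRunElem S) → Prop where
  | memoHit {A : SubNFA Sigma S} {q : S} {i : ℕ} {M : S × ℕ → Option LaVal} {v : LaVal} :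
      M (q, i) = some v →
      MemoLaRun w A q i M M v.toResult [.memo q i, v.toResult.elem]
  | accept {A : SubNFA Sigma S} {q : S} {i : ℕ} {M : S × ℕ → Option LaVal} :
      M (q, i) = none → q ∈ A.F →
      MemoLaRun w A q i M (laRecord M q i (.successAt i)) (.successAt i)
        [.call q i, .succAt i]
  | eps {A : SubNFA Sigma S} {q q' : S} {i : ℕ} {M M' : S × ℕ → Option LaVal}
      {r : LaResult} {s : List (LaRunElem S)} :
      M (q, i) = none → q ∉ A.F → A.T q = SubTrans.eps q' →
      MemoLaRun w A q' i M M' r s →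
      MemoLaRun w A q i M (laRecord M' q i r) r (.call q i :: s ++ [r.elem])
  | branchNoFail {A : SubNFA Sigma S} {q q' q'' : S} {i : ℕ}
      {M M' : S × ℕ → Option LaVal} {r : LaResult} {s : List (LaRunElem S)} :
      M (q, i) = none → q ∉ A.F → A.T q = SubTrans.branch q' q'' →
      MemoLaRun w A q' i M M' r s → r ≠ .failure →
      MemoLaRun w A q i M (laRecord M' q i r) r (.call q i :: s ++ [r.elem])
  | branchFail {A : SubNFA Sigma S} {q q' q'' : S} {i : ℕ}
      {M M1 M2 : S × ℕ → Option LaVal} {r : LaResult} {s1 s2 : List (LaRunElem S)} :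
      M (q, i) = none → q ∉ A.F → A.T q = SubTrans.branch q' q'' →
      MemoLaRun w A q' i M M1 .failure s1 →
      MemoLaRun w A q'' i M1 M2 r s2 →
      MemoLaRun w A q i M (laRecord M2 q i r) r (.call q i :: s1 ++ s2 ++ [r.elem])
  | charSucc {A : SubNFA Sigma S} {q q' : S} {σ : Sigma} {i : ℕ}
      {M M' : S × ℕ → Option LaVal} {r : LaResult} {s : List (LaRunElem S)} :
      M (q, i) = none → q ∉ A.F → A.T q = SubTrans.char σ q' →
      w[i]? = some σ →
      MemoLaRun w A q' (i + 1) M M' r s →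
      MemoLaRun w A q i M (laRecord M' q i r) r (.call q i :: s ++ [r.elem])
  | charFail {A : SubNFA Sigma S} {q q' : S} {σ : Sigma} {i : ℕ}
      {M : S × ℕ → Option LaVal} :
      M (q, i) = none → q ∉ A.F → A.T q = SubTrans.char σ q' →
      w[i]? ≠ some σ →
      MemoLaRun w A q i M (laRecord M q i .failure) .failure [.call q i, .fail]
  | plaSucc {A A' : SubNFA Sigma S} {q q' : S} {i : ℕ}
      {M M1 M2 : S × ℕ → Option LaVal} {r1 r : LaResult} {s1 s2 : List (LaRunElem S)} :
      M (q, i) = none → q ∉ A.F → A.T q = SubTrans.sub Kind.pla A' q' →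
      MemoLaRun w A' A'.q0 i M M1 r1 s1 → r1 ≠ .failure →
      MemoLaRun w A q' i M1 M2 r s2 →
      MemoLaRun w A q i M (laRecord M2 q i r) r (.call q i :: s1 ++ s2 ++ [r.elem])
  | plaFail {A A' : SubNFA Sigma S} {q q' : S} {i : ℕ}
      {M M1 : S × ℕ → Option LaVal} {s1 : List (LaRunElem S)} :
      M (q, i) = none → q ∉ A.F → A.T q = SubTrans.sub Kind.pla A' q' →
      MemoLaRun w A' A'.q0 i M M1 .failure s1 →
      MemoLaRun w A q i M (laRecord M1 q i .failure) .failure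
        (.call q i :: s1 ++ [LaRunElem.fail])

/-! ## `Memo-at` -/

/-- Results of `Memo-at`: `SuccessAt(i', K)` with a set `K` of delayed memoization keys,
or `Failure(j)` with a nesting depth `j`. -/
inductive AtResult (S : Type) : Type where
  | successAt : ℕ → Finset (S × ℕ) → AtResult S
  | failure : ℕ → AtResult S

/-- Elements of runs of `Memo-at`: calls `C(q,i)`, memoization-table invocations
`M(q,i)`, and results `S(i')` and `F(j)`. -/
inductive AtRunElem (S : Type) : Type where
  | call : S → ℕ → AtRunElem S
  | memo : S → ℕ → AtRunElem S
  | succ : ℕ → AtRunElem S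
  | fail : ℕ → AtRunElem S
deriving DecidableEq

def AtRunElem.isRet : AtRunElem S → Bool
  | .succ _ => true
  | .fail _ => true
  | _ => false

def AtRunElem.isCall : AtRunElem S → Bool
  | .call _ _ => true
  | .memo _ _ => true
  | _ => false

def atMemoToCall : AtRunElem S → Option (AtRunElem S)
  | .memo q i => some (.call q i)
  | _ => none

def AtResult.elem {S : Type} : AtResult S → AtRunElem S
  | .successAt i _ => .succ i
  | .failure j => .fail j

/-- `f`, converting results of `Memo-at` to results of `Match-(la,at)`. -/
def AtResult.toResult {S : Type} : AtResult S → Result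
  | .successAt i _ => .successAt i
  | .failure _ => .failure

/-- The final step of `Memo-at`: on success, the key `(q,i)` is added to the set of
delayed keys. -/
def atFinal [DecidableEq S] (q : S) (i : ℕ) : AtResult S → AtResult S
  | .successAt i' K => .successAt i' (insert (q, i) K)
  | .failure j => .failure j

/-- The final recording of `Memo-at`: `M(q,i) := Failure(j)` if the result is
`Failure(j)`. -/
def atRecord [DecidableEq S] (M : S × ℕ → Option ℕ) (q : S) (i : ℕ) :
    AtResult S → (S × ℕ → Option ℕ)
  | .failure j => fun p => if p = (q, i) then some j else M p
  | _ => M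

/-- Batch recording `M(k) := Failure(j)` for every `k ∈ K`. -/
def atBatch [DecidableEq S] (M : S × ℕ → Option ℕ) (K : Finset (S × ℕ)) (j : ℕ) :
    S × ℕ → Option ℕ :=
  fun p => if p ∈ K then some j else M p

/-- Big-step semantics (with resulting memoization table and produced run) of the
memoized backtracking matching algorithm `Memo-at` for at-NFAs:
`MemoAtRun A0 w A q i M M' r s` means the call `Memo-at^M_{A0,A,w}(q, i)` (with the
whole automaton `A0` and current sub-automaton `A`) terminates with result `r`, final
memoization table `M'`, and produces the run `s`. -/
inductive MemoAtRun [DecidableEq S] (A0 : SubNFA Sigma S) (w : List Sigma) :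
    SubNFA Sigma S → S → ℕ → (S × ℕ → Option ℕ) → (S × ℕ → Option ℕ) →
    AtResult S → List (AtRunElem S) → Prop where
  | memoHit {A : SubNFA Sigma S} {q : S} {i j : ℕ} {M : S × ℕ → Option ℕ} :
      M (q, i) = some j →
      MemoAtRun A0 w A q i M M (.failure j) [.memo q i, .fail j]
  | accept {A : SubNFA Sigma S} {q : S} {i : ℕ} {M : S × ℕ → Option ℕ} :
      M (q, i) = none → q ∈ A.F →
      MemoAtRun A0 w A q i M M (.successAt i {(q, i)}) [.call q i, .succ i]
  | eps {A : SubNFA Sigma S} {q q' : S} {i : ℕ} {M M' : S × ℕ → Option ℕ}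
      {r : AtResult S} {s : List (AtRunElem S)} :
      M (q, i) = none → q ∉ A.F → A.T q = SubTrans.eps q' →
      MemoAtRun A0 w A q' i M M' r s →
      MemoAtRun A0 w A q i M (atRecord M' q i r) (atFinal q i r)
        (.call q i :: s ++ [r.elem])
  | branchNoBT {A : SubNFA Sigma S} {q q' q'' : S} {i : ℕ} {M M' : S × ℕ → Option ℕ}
      {r : AtResult S} {s : List (AtRunElem S)} :
      M (q, i) = none → q ∉ A.F → A.T q = SubTrans.branch q' q'' →
      MemoAtRun A0 w A q' i M M' r s →
      (∀ j, r = AtResult.failure j → j ≠ A0.nu q) →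
      MemoAtRun A0 w A q i M (atRecord M' q i r) (atFinal q i r)
        (.call q i :: s ++ [r.elem])
  | branchBTSucc {A : SubNFA Sigma S} {q q' q'' : S} {i i'' : ℕ} {K : Finset (S × ℕ)}
      {M M1 M2 : S × ℕ → Option ℕ} {s1 s2 : List (AtRunElem S)} :
      M (q, i) = none → q ∉ A.F → A.T q = SubTrans.branch q' q'' →
      MemoAtRun A0 w A q' i M M1 (.failure (A0.nu q)) s1 →
      MemoAtRun A0 w A q'' i M1 M2 (.successAt i'' K) s2 →
      MemoAtRun A0 w A q i M M2 (atFinal q i (.successAt i'' K))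
        (.call q i :: s1 ++ s2 ++ [AtRunElem.succ i''])
  | branchBTFail {A : SubNFA Sigma S} {q q' q'' : S} {i j' : ℕ}
      {M M1 M2 : S × ℕ → Option ℕ} {s1 s2 : List (AtRunElem S)} :
      M (q, i) = none → q ∉ A.F → A.T q = SubTrans.branch q' q'' →
      MemoAtRun A0 w A q' i M M1 (.failure (A0.nu q)) s1 →
      MemoAtRun A0 w A q'' i M1 M2 (.failure j') s2 →
      MemoAtRun A0 w A q i M (atRecord M2 q i (.failure (min (A0.nu q) j')))
        (.failure (min (A0.nu q) j'))
        (.call q i :: s1 ++ s2 ++ [AtRunElem.fail (min (A0.nu q) j')])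
  | charSucc {A : SubNFA Sigma S} {q q' : S} {σ : Sigma} {i : ℕ}
      {M M' : S × ℕ → Option ℕ} {r : AtResult S} {s : List (AtRunElem S)} :
      M (q, i) = none → q ∉ A.F → A.T q = SubTrans.char σ q' →
      w[i]? = some σ →
      MemoAtRun A0 w A q' (i + 1) M M' r s →
      MemoAtRun A0 w A q i M (atRecord M' q i r) (atFinal q i r)
        (.call q i :: s ++ [r.elem])
  | charFail {A : SubNFA Sigma S} {q q' : S} {σ : Sigma} {i : ℕ}
      {M : S × ℕ → Option ℕ} :
      M (q, i) = none → q ∉ A.F → A.T q = SubTrans.char σ q' →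
      w[i]? ≠ some σ →
      MemoAtRun A0 w A q i M (atRecord M q i (.failure (A0.nu q)))
        (.failure (A0.nu q)) [.call q i, .fail (A0.nu q)]
  | subSuccSucc {A A' : SubNFA Sigma S} {q q' : S} {i i' i'' : ℕ}
      {K' K'' : Finset (S × ℕ)} {M M1 M2 : S × ℕ → Option ℕ}
      {s1 s2 : List (AtRunElem S)} :
      M (q, i) = none → q ∉ A.F → A.T q = SubTrans.sub Kind.at A' q' →
      MemoAtRun A0 w A' A'.q0 i M M1 (.successAt i' K') s1 →
      MemoAtRun A0 w A q' i' M1 M2 (.successAt i'' K'') s2 →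
      MemoAtRun A0 w A q i M M2 (atFinal q i (.successAt i'' (K' ∪ K'')))
        (.call q i :: s1 ++ s2 ++ [AtRunElem.succ i''])
  | subSuccFail {A A' : SubNFA Sigma S} {q q' : S} {i i' j : ℕ} {K' : Finset (S × ℕ)}
      {M M1 M2 : S × ℕ → Option ℕ} {s1 s2 : List (AtRunElem S)} :
      M (q, i) = none → q ∉ A.F → A.T q = SubTrans.sub Kind.at A' q' →
      MemoAtRun A0 w A' A'.q0 i M M1 (.successAt i' K') s1 →
      MemoAtRun A0 w A q' i' M1 M2 (.failure j) s2 →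
      MemoAtRun A0 w A q i M (atRecord (atBatch M2 K' j) q i (.failure j)) (.failure j)
        (.call q i :: s1 ++ s2 ++ [AtRunElem.fail j])
  | subFailHigh {A A' : SubNFA Sigma S} {q q' : S} {i j : ℕ}
      {M M1 : S × ℕ → Option ℕ} {s1 : List (AtRunElem S)} :
      M (q, i) = none → q ∉ A.F → A.T q = SubTrans.sub Kind.at A' q' →
      MemoAtRun A0 w A' A'.q0 i M M1 (.failure j) s1 →
      A0.nu q < j →
      MemoAtRun A0 w A q i M (atRecord M1 q i (.failure (A0.nu q)))
        (.failure (A0.nu q)) (.call q i :: s1 ++ [AtRunElem.fail (A0.nu q)])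
  | subFailLow {A A' : SubNFA Sigma S} {q q' : S} {i j : ℕ}
      {M M1 : S × ℕ → Option ℕ} {s1 : List (AtRunElem S)} :
      M (q, i) = none → q ∉ A.F → A.T q = SubTrans.sub Kind.at A' q' →
      MemoAtRun A0 w A' A'.q0 i M M1 (.failure j) s1 →
      j ≤ A0.nu q →
      MemoAtRun A0 w A q i M (atRecord M1 q i (.failure j)) (.failure j)
        (.call q i :: s1 ++ [AtRunElem.fail j])

/-! ## The combined algorithm `Memo-(la,at)` -/

/-- Values of the memoization table of `Memo-(la,at)`: `Success` or `Failure(j)`. -/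
inductive LaAtVal : Type where
  | success : LaAtVal
  | failure : ℕ → LaAtVal

/-- Results of `Memo-(la,at)`: `SuccessAt(i', K)`, bare `Success`, or `Failure(j)`. -/
inductive LaAtResult (S : Type) : Type where
  | successAt : ℕ → Finset (S × ℕ) → LaAtResult S
  | success : LaAtResult S
  | failure : ℕ → LaAtResult S

def LaAtVal.toResult {S : Type} : LaAtVal → LaAtResult S
  | .success => .success
  | .failure j => .failure j

/-- `f`, converting results of `Memo-(la,at)` to results of `Match-(la,at)`
(undefined on the bare value `Success`). -/
def LaAtResult.toResult? {S : Type} : LaAtResult S → Option Result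
  | .successAt i _ => some (.successAt i)
  | .success => none
  | .failure _ => some .failure

def laAtFinal [DecidableEq S] (q : S) (i : ℕ) : LaAtResult S → LaAtResult S
  | .successAt i' K => .successAt i' (insert (q, i) K)
  | r => r

def laAtRecord [DecidableEq S] (M : S × ℕ → Option LaAtVal) (q : S) (i : ℕ) :
    LaAtResult S → (S × ℕ → Option LaAtVal)
  | .successAt _ _ => M
  | .success => fun p => if p = (q, i) then some LaAtVal.success else M p
  | .failure j => fun p => if p = (q, i) then some (LaAtVal.failure j) else M p

def laAtBatch [DecidableEq S] (M : S × ℕ → Option LaAtVal) (K : Finset (S × ℕ))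
    (v : LaAtVal) : S × ℕ → Option LaAtVal :=
  fun p => if p ∈ K then some v else M p

/-- Big-step semantics (with resulting memoization table and the number of recursive
calls made) of the combined memoized backtracking matching algorithm `Memo-(la,at)`:
`MemoLaAtRun w A0 A q i M M' r n` means the call `Memo-(la,at)^M_{A0,A,w}(q, i)`
terminates with result `r`, final memoization table `M'`, making `n` calls in total.
On a positive look-ahead transition, the sub-automaton becomes the new whole automaton
(so nesting depths of atomic grouping are reset by look-around operators). -/
inductive MemoLaAtRun [DecidableEq S] (w : List Sigma) :
    SubNFA Sigma S → SubNFA Sigma S → S → ℕ →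
    (S × ℕ → Option LaAtVal) → (S × ℕ → Option LaAtVal) → LaAtResult S → ℕ → Prop where
  | memoHit {A0 A : SubNFA Sigma S} {q : S} {i : ℕ} {M : S × ℕ → Option LaAtVal}
      {v : LaAtVal} :
      M (q, i) = some v →
      MemoLaAtRun w A0 A q i M M v.toResult 1
  | accept {A0 A : SubNFA Sigma S} {q : S} {i : ℕ} {M : S × ℕ → Option LaAtVal} :
      M (q, i) = none → q ∈ A.F →
      MemoLaAtRun w A0 A q i M M (.successAt i {(q, i)}) 1
  | eps {A0 A : SubNFA Sigma S} {q q' : S} {i : ℕ} {M M' : S × ℕ → Option LaAtVal}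
      {r : LaAtResult S} {n : ℕ} :
      M (q, i) = none → q ∉ A.F → A.T q = SubTrans.eps q' →
      MemoLaAtRun w A0 A q' i M M' r n →
      MemoLaAtRun w A0 A q i M (laAtRecord M' q i (laAtFinal q i r)) (laAtFinal q i r)
        (n + 1)
  | branchNoBT {A0 A : SubNFA Sigma S} {q q' q'' : S} {i : ℕ}
      {M M' : S × ℕ → Option LaAtVal} {r : LaAtResult S} {n : ℕ} :
      M (q, i) = none → q ∉ A.F → A.T q = SubTrans.branch q' q'' →
      MemoLaAtRun w A0 A q' i M M' r n →
      (∀ j, r = LaAtResult.failure j → j ≠ A0.nu q) →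
      MemoLaAtRun w A0 A q i M (laAtRecord M' q i (laAtFinal q i r)) (laAtFinal q i r)
        (n + 1)
  | branchBTFail {A0 A : SubNFA Sigma S} {q q' q'' : S} {i j' : ℕ}
      {M M1 M2 : S × ℕ → Option LaAtVal} {n1 n2 : ℕ} :
      M (q, i) = none → q ∉ A.F → A.T q = SubTrans.branch q' q'' →
      MemoLaAtRun w A0 A q' i M M1 (.failure (A0.nu q)) n1 →
      MemoLaAtRun w A0 A q'' i M1 M2 (.failure j') n2 →
      MemoLaAtRun w A0 A q i M
        (laAtRecord M2 q i (.failure (min (A0.nu q) j')))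
        (.failure (min (A0.nu q) j')) (n1 + n2 + 1)
  | branchBTOther {A0 A : SubNFA Sigma S} {q q' q'' : S} {i : ℕ}
      {M M1 M2 : S × ℕ → Option LaAtVal} {r : LaAtResult S} {n1 n2 : ℕ} :
      M (q, i) = none → q ∉ A.F → A.T q = SubTrans.branch q' q'' →
      MemoLaAtRun w A0 A q' i M M1 (.failure (A0.nu q)) n1 →
      MemoLaAtRun w A0 A q'' i M1 M2 r n2 →
      (∀ j, r ≠ LaAtResult.failure j) →
      MemoLaAtRun w A0 A q i M (laAtRecord M2 q i (laAtFinal q i r)) (laAtFinal q i r)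
        (n1 + n2 + 1)
  | charSucc {A0 A : SubNFA Sigma S} {q q' : S} {σ : Sigma} {i : ℕ}
      {M M' : S × ℕ → Option LaAtVal} {r : LaAtResult S} {n : ℕ} :
      M (q, i) = none → q ∉ A.F → A.T q = SubTrans.char σ q' →
      w[i]? = some σ →
      MemoLaAtRun w A0 A q' (i + 1) M M' r n →
      MemoLaAtRun w A0 A q i M (laAtRecord M' q i (laAtFinal q i r)) (laAtFinal q i r)
        (n + 1)
  | charFail {A0 A : SubNFA Sigma S} {q q' : S} {σ : Sigma} {i : ℕ}
      {M : S × ℕ → Option LaAtVal} :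
      M (q, i) = none → q ∉ A.F → A.T q = SubTrans.char σ q' →
      w[i]? ≠ some σ →
      MemoLaAtRun w A0 A q i M (laAtRecord M q i (.failure (A0.nu q)))
        (.failure (A0.nu q)) 1
  | plaSuccAt {A0 A A' : SubNFA Sigma S} {q q' : S} {i i' : ℕ} {K' : Finset (S × ℕ)}
      {M M1 M2 : S × ℕ → Option LaAtVal} {r : LaAtResult S} {n1 n2 : ℕ} :
      M (q, i) = none → q ∉ A.F → A.T q = SubTrans.sub Kind.pla A' q' →
      MemoLaAtRun w A' A' A'.q0 i M M1 (.successAt i' K') n1 →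
      MemoLaAtRun w A0 A q' i (laAtBatch M1 K' LaAtVal.success) M2 r n2 →
      MemoLaAtRun w A0 A q i M (laAtRecord M2 q i (laAtFinal q i r)) (laAtFinal q i r)
        (n1 + n2 + 1)
  | plaBare {A0 A A' : SubNFA Sigma S} {q q' : S} {i : ℕ}
      {M M1 M2 : S × ℕ → Option LaAtVal} {r : LaAtResult S} {n1 n2 : ℕ} :
      M (q, i) = none → q ∉ A.F → A.T q = SubTrans.sub Kind.pla A' q' →
      MemoLaAtRun w A' A' A'.q0 i M M1 .success n1 →
      MemoLaAtRun w A0 A q' i M1 M2 r n2 →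
      MemoLaAtRun w A0 A q i M (laAtRecord M2 q i (laAtFinal q i r)) (laAtFinal q i r)
        (n1 + n2 + 1)
  | plaFail {A0 A A' : SubNFA Sigma S} {q q' : S} {i j : ℕ}
      {M M1 : S × ℕ → Option LaAtVal} {n1 : ℕ} :
      M (q, i) = none → q ∉ A.F → A.T q = SubTrans.sub Kind.pla A' q' →
      MemoLaAtRun w A' A' A'.q0 i M M1 (.failure j) n1 →
      MemoLaAtRun w A0 A q i M (laAtRecord M1 q i (.failure (A0.nu q)))
        (.failure (A0.nu q)) (n1 + 1)
  | atSuccSucc {A0 A A' : SubNFA Sigma S} {q q' : S} {i i' i'' : ℕ}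
      {K' K'' : Finset (S × ℕ)} {M M1 M2 : S × ℕ → Option LaAtVal} {n1 n2 : ℕ} :
      M (q, i) = none → q ∉ A.F → A.T q = SubTrans.sub Kind.at A' q' →
      MemoLaAtRun w A0 A' A'.q0 i M M1 (.successAt i' K') n1 →
      MemoLaAtRun w A0 A q' i' M1 M2 (.successAt i'' K'') n2 →
      MemoLaAtRun w A0 A q i M M2
        (laAtFinal q i (.successAt i'' (K' ∪ K''))) (n1 + n2 + 1)
  | atSuccBare {A0 A A' : SubNFA Sigma S} {q q' : S} {i i' : ℕ} {K' : Finset (S × ℕ)}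
      {M M1 M2 : S × ℕ → Option LaAtVal} {n1 n2 : ℕ} :
      M (q, i) = none → q ∉ A.F → A.T q = SubTrans.sub Kind.at A' q' →
      MemoLaAtRun w A0 A' A'.q0 i M M1 (.successAt i' K') n1 →
      MemoLaAtRun w A0 A q' i' M1 M2 .success n2 →
      MemoLaAtRun w A0 A q i M
        (laAtRecord (laAtBatch M2 K' LaAtVal.success) q i .success) .success
        (n1 + n2 + 1)
  | atSuccFail {A0 A A' : SubNFA Sigma S} {q q' : S} {i i' j : ℕ} {K' : Finset (S × ℕ)}
      {M M1 M2 : S × ℕ → Option LaAtVal} {n1 n2 : ℕ} :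
      M (q, i) = none → q ∉ A.F → A.T q = SubTrans.sub Kind.at A' q' →
      MemoLaAtRun w A0 A' A'.q0 i M M1 (.successAt i' K') n1 →
      MemoLaAtRun w A0 A q' i' M1 M2 (.failure j) n2 →
      MemoLaAtRun w A0 A q i M
        (laAtRecord (laAtBatch M2 K' (LaAtVal.failure j)) q i (.failure j))
        (.failure j) (n1 + n2 + 1)
  | atBare {A0 A A' : SubNFA Sigma S} {q q' : S} {i : ℕ}
      {M M1 : S × ℕ → Option LaAtVal} {n1 : ℕ} :
      M (q, i) = none → q ∉ A.F → A.T q = SubTrans.sub Kind.at A' q' →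
      MemoLaAtRun w A0 A' A'.q0 i M M1 .success n1 →
      MemoLaAtRun w A0 A q i M (laAtRecord M1 q i .success) .success (n1 + 1)
  | atFailHigh {A0 A A' : SubNFA Sigma S} {q q' : S} {i j : ℕ}
      {M M1 : S × ℕ → Option LaAtVal} {n1 : ℕ} :
      M (q, i) = none → q ∉ A.F → A.T q = SubTrans.sub Kind.at A' q' →
      MemoLaAtRun w A0 A' A'.q0 i M M1 (.failure j) n1 →
      A0.nu q < j →
      MemoLaAtRun w A0 A q i M (laAtRecord M1 q i (.failure (A0.nu q)))
        (.failure (A0.nu q)) (n1 + 1)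
  | atFailLow {A0 A A' : SubNFA Sigma S} {q q' : S} {i j : ℕ}
      {M M1 : S × ℕ → Option LaAtVal} {n1 : ℕ} :
      M (q, i) = none → q ∉ A.F → A.T q = SubTrans.sub Kind.at A' q' →
      MemoLaAtRun w A0 A' A'.q0 i M M1 (.failure j) n1 →
      j ≤ A0.nu q →
      MemoLaAtRun w A0 A q i M (laAtRecord M1 q i (.failure j)) (.failure j) (n1 + 1)



/-! ## Structure of the component list -/

def SubTrans.subComps (t : SubTrans Sigma S) : List (SubNFA Sigma S) :=
  match t with
  | .sub _ A' _ => A'.comps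
  | _ => []

theorem SubNFA.comps_eq (A : SubNFA Sigma S) :
    A.comps = A :: A.Q.flatMap (fun q => (A.T q).subComps) := by
  obtain ⟨Q, q0, F, T⟩ := A
  simp only [SubNFA.comps, SubNFA.compsD, SubNFA.Q, SubNFA.T, List.map_cons, List.map_flatMap]
  congr 2
  funext q
  cases T q <;> simp [SubTrans.subCompsD, SubTrans.subComps, SubNFA.comps]

theorem SubNFA.self_mem_comps (A : SubNFA Sigma S) : A ∈ A.comps := by
  rw [SubNFA.comps_eq]; simp

theorem SubNFA.sub_comps_lt (A A' : SubNFA Sigma S) (q q' : S) (k : Kind) (hq : q ∈ A.Q)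
    (h : A.T q = SubTrans.sub k A' q') : A'.comps.length < A.comps.length := by
  rw [SubNFA.comps_eq A, List.length_cons, List.length_flatMap]
  have : A'.comps.length ∈ A.Q.map (fun q => ((A.T q).subComps).length) :=
    List.mem_map.2 ⟨q, hq, by rw [h]; rfl⟩
  have := List.le_sum_of_mem this
  omega

theorem SubNFA.sub_comps_subset (A A' : SubNFA Sigma S) (q q' : S) (k : Kind) (hq : q ∈ A.Q)
    (h : A.T q = SubTrans.sub k A' q') : A'.comps ⊆ A.comps := by
  intro B hB
  rw [SubNFA.comps_eq A]
  refine List.mem_cons_of_mem _ (List.mem_flatMap.2 ⟨q, hq, ?_⟩)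
  rw [h]; exact hB

theorem SubNFA.comps_trans (n : ℕ) : ∀ (A B : SubNFA Sigma S), A.comps.length = n →
    B ∈ A.comps → B.comps ⊆ A.comps := by
  induction n using Nat.strong_induction_on with
  | _ n ih =>
    intro A B hn hB
    rw [SubNFA.comps_eq A] at hB
    rcases List.mem_cons.1 hB with rfl | hB
    · exact fun _ h => h
    · obtain ⟨q, hq, hB⟩ := List.mem_flatMap.1 hB
      cases hT : A.T q with
      | sub k A' q' =>
        rw [hT] at hB
        have h1 := SubNFA.sub_comps_lt A A' q q' k hq hT
        exact fun x hx => SubNFA.sub_comps_subset A A' q q' k hq hT (ih _ (hn ▸ h1) A' B rfl hB hx)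
      | _ => rw [hT] at hB; simp [SubTrans.subComps] at hB

theorem SubNFA.sub_mem_comps (A B A' : SubNFA Sigma S) (q q' : S) (k : Kind)
    (hB : B ∈ A.comps) (hq : q ∈ B.Q)
    (h : B.T q = SubTrans.sub k A' q') : A' ∈ A.comps :=
  SubNFA.comps_trans _ A B rfl hB
    (SubNFA.sub_comps_subset B A' q q' k hq h (SubNFA.self_mem_comps A'))

/-! ## Counting transitions -/

/-- `1` on sub-automaton transitions and `0` otherwise. -/
def SubTrans.isSub (t : SubTrans Sigma S) : ℕ :=
  match t with
  | .sub _ _ _ => 1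
  | _ => 0

/-- Number of recursive calls a transition can trigger. -/
def SubTrans.out (t : SubTrans Sigma S) : ℕ :=
  match t with
  | .eps _ => 1
  | .char _ _ => 1
  | .branch _ _ => 2
  | .sub _ _ _ => 2

/-- The number of sub-automaton transitions of one component. -/
def SubNFA.nSub [DecidableEq S] (B : SubNFA Sigma S) : ℕ :=
  ((B.Q.filter (fun q => decide (q ∉ B.F))).map fun q => (B.T q).isSub).sum

theorem sum_map_flatMap {β γ : Type*} (l : List β) (f : β → List γ) (g : γ → ℕ) :
    ((l.flatMap f).map g).sum = (l.map (fun b => ((f b).map g).sum)).sum := by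
  induction l with
  | nil => rfl
  | cons a l ih => simp [ih]

theorem sum_filter_le {β : Type*} (l : List β) (p : β → Bool) (g : β → ℕ) :
    ((l.filter p).map g).sum ≤ (l.map g).sum := by
  induction l with
  | nil => simp
  | cons a l ih =>
    by_cases h : p a <;> simp [h] <;> omega

theorem SubNFA.nSub_lt [DecidableEq S] (n : ℕ) : ∀ (A : SubNFA Sigma S), A.comps.length = n →
    1 + (A.comps.map SubNFA.nSub).sum ≤ A.comps.length := by
  induction n using Nat.strong_induction_on with
  | _ n ih =>
    intro A hn
    have key : ∀ q ∈ A.Q, (A.T q).isSub + ((A.T q).subComps.map SubNFA.nSub).sum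
        ≤ (A.T q).subComps.length := by
      intro q hq
      cases hT : A.T q with
      | sub k A' q' =>
        have h1 := SubNFA.sub_comps_lt A A' q q' k hq hT
        exact ih _ (hn ▸ h1) A' rfl
      | _ => simp [SubTrans.subComps, SubTrans.isSub]
    rw [SubNFA.comps_eq A, List.length_cons, List.length_flatMap, List.map_cons, List.sum_cons,
      sum_map_flatMap]
    have h1 : A.nSub ≤ (A.Q.map fun q => (A.T q).isSub).sum := sum_filter_le _ _ _
    have h2 := List.sum_le_sum key
    rw [List.sum_map_add] at h2
    omega

theorem SubNFA.allTransNF_isSub [DecidableEq S] (A : SubNFA Sigma S) :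
    (A.allTransNF.map (fun p => p.2.isSub)).sum = (A.comps.map SubNFA.nSub).sum := by
  rw [SubNFA.allTransNF, sum_map_flatMap]
  simp only [List.map_map]
  rfl

theorem SubNFA.mem_allTransNF [DecidableEq S] (A : SubNFA Sigma S) (p : S × SubTrans Sigma S) :
    p ∈ A.allTransNF ↔ ∃ B ∈ A.comps, p.1 ∈ B.Q ∧ p.1 ∉ B.F ∧ p.2 = B.T p.1 := by
  obtain ⟨q, t⟩ := p
  simp only [SubNFA.allTransNF, List.mem_flatMap, List.mem_map, List.mem_filter,
    decide_eq_true_eq, Prod.mk.injEq]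
  constructor
  · rintro ⟨B, hB, q1, ⟨h1, h2⟩, rfl, rfl⟩
    exact ⟨B, hB, h1, h2, rfl⟩
  · rintro ⟨B, hB, h1, h2, rfl⟩
    exact ⟨B, hB, q, ⟨h1, h2⟩, rfl, rfl⟩

theorem SubNFA.mem_allStates (A B : SubNFA Sigma S) (q : S) (hB : B ∈ A.comps) (hq : q ∈ B.Q) :
    q ∈ A.allStates := List.mem_flatMap.2 ⟨B, hB, hq⟩

theorem SubNFA.comp_unique (A B B' : SubNFA Sigma S) (hWF : A.WF) (q : S) (hB : B ∈ A.comps)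
    (hB' : B' ∈ A.comps) (hq : q ∈ B.Q) (hq' : q ∈ B'.Q) : B = B' := by
  by_contra hne
  have h := (List.nodup_flatMap.1 hWF.2).2
  have : Std.Symm (Function.onFun List.Disjoint (SubNFA.Q (Sigma := Sigma) (S := S))) :=
    ⟨fun _ _ hd => List.Disjoint.symm hd⟩
  have := h.forall hB hB' hne
  exact this hq hq'

theorem SubNFA.nodup_q0 (A : SubNFA Sigma S) (hWF : A.WF) : (A.comps.map SubNFA.q0).Nodup := by
  have h := (List.nodup_flatMap.1 hWF.2).2
  rw [List.Nodup, List.pairwise_map]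
  refine List.Pairwise.imp_of_mem ?_ h
  intro a b ha hb hd he
  exact hd (hWF.1 a ha).1 (he ▸ (hWF.1 b hb).1)

theorem sum_ite_eq_one [DecidableEq S] (l : List S) (q : S) (h : q ∈ l) :
    1 ≤ (l.map (fun x => if q = x then 1 else 0)).sum := by
  refine List.le_sum_of_mem (List.mem_map.2 ⟨q, h, by simp⟩)

theorem length_le_sum_ite [DecidableEq S] (l c : List S) (hc : c.Nodup) (h : c ⊆ l) :
    c.length ≤ (l.map (fun x => if x ∈ c then 1 else 0)).sum := by
  have h1 : (l.map (fun x => if x ∈ c then 1 else 0)).sum = (l.filter (· ∈ c)).length := by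
    clear h
    induction l with
    | nil => rfl
    | cons a l ih => by_cases ha : a ∈ c <;> simp [ha, ih]; omega
  rw [h1]
  refine (List.subperm_of_subset hc ?_).length_le
  intro x hx
  simp [hx, h hx]

theorem sum_map_comm {β γ : Type*} (l : List β) (m : List γ) (f : β → γ → ℕ) :
    (l.map fun b => (m.map fun c => f b c).sum).sum =
      (m.map fun c => (l.map fun b => f b c).sum).sum := by
  induction l with
  | nil => simp
  | cons a l ih => simp [ih, List.sum_map_add]

theorem SubNFA.sum_inDeg [DecidableEq S] (A : SubNFA Sigma S) (hWF : A.WF) :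
    1 + (A.allTransNF.map (fun p => p.2.out)).sum ≤ (A.allStates.map A.inDeg).sum := by
  have hin : (A.allStates.map A.inDeg).sum =
      (A.allStates.map fun q => (A.allTransNF.map (fun p => p.2.hits q)).sum).sum +
      (A.allStates.map fun q => if q ∈ A.comps.map SubNFA.q0 then 1 else 0).sum := by
    rw [← List.sum_map_add]; rfl
  have h1 := length_le_sum_ite A.allStates _ (A.nodup_q0 hWF) (by
    intro q hq
    obtain ⟨B, hB, rfl⟩ := List.mem_map.1 hq
    exact A.mem_allStates B _ hB (hWF.1 B hB).1)
  rw [List.length_map] at h1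
  have h2 := SubNFA.nSub_lt _ A rfl
  rw [← SubNFA.allTransNF_isSub] at h2
  rw [hin, sum_map_comm]
  have h3 : (A.allTransNF.map (fun p => p.2.out)).sum ≤
      (A.allTransNF.map (fun p => (A.allStates.map fun q => p.2.hits q).sum + p.2.isSub)).sum := by
    apply List.sum_le_sum
    intro p hp
    obtain ⟨B, hB, hq, hF, hT⟩ := (A.mem_allTransNF p).1 hp
    have hok := (hWF.1 B hB).2.2 p.1 hq hF
    rw [← hT] at hok
    cases h : p.2 with
    | eps q' =>
      rw [h] at hok
      exact sum_ite_eq_one _ _ (A.mem_allStates B _ hB hok)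
    | char σ q' =>
      rw [h] at hok
      exact sum_ite_eq_one _ _ (A.mem_allStates B _ hB hok)
    | branch q' q'' =>
      rw [h] at hok
      simp only [SubTrans.out, SubTrans.hits, SubTrans.isSub, List.sum_map_add]
      have := sum_ite_eq_one _ _ (A.mem_allStates B _ hB hok.1)
      have := sum_ite_eq_one _ _ (A.mem_allStates B _ hB hok.2)
      omega
    | sub k A' q' =>
      rw [h] at hok
      have := sum_ite_eq_one _ _ (A.mem_allStates B _ hB hok)
      simp only [SubTrans.out, SubTrans.hits, SubTrans.isSub]
      omega
  rw [List.sum_map_add] at h3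
  omega

theorem sum_le_length_mul_max (l : List S) (f : S → ℕ) :
    (l.map f).sum ≤ (l.map f).foldr max 0 * l.length := by
  induction l with
  | nil => simp
  | cons a l ih =>
    simp only [List.map_cons, List.sum_cons, List.foldr_cons, List.length_cons]
    have h1 := le_max_left (f a) ((l.map f).foldr max 0)
    have h2 := le_max_right (f a) ((l.map f).foldr max 0)
    have h3 := Nat.mul_le_mul_right l.length h2
    rw [Nat.mul_add]
    omega

/-! ## The potential function -/

/-- Total number of calls triggered by the defined table entries. -/
def pot [DecidableEq S] (A : SubNFA Sigma S) (w : List Sigma) (M : S × ℕ → Option LaVal) : ℕ :=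
  (A.allTransNF.map fun p =>
    ∑ i ∈ Finset.range (w.length + 1), if M (p.1, i) = none then 0 else p.2.out).sum

theorem sum_add_le {β : Type*} (l : List β) (f g : β → ℕ) (x : β) (c : ℕ) (hx : x ∈ l)
    (h : ∀ y ∈ l, f y ≤ g y) (hc : f x + c ≤ g x) : (l.map f).sum + c ≤ (l.map g).sum := by
  induction l with
  | nil => simp at hx
  | cons a l ih =>
    simp only [List.map_cons, List.sum_cons]
    have h0 := h a (by simp)
    have hl : ∀ y ∈ l, f y ≤ g y := fun y hy => h y (by simp [hy])
    rcases List.mem_cons.1 hx with rfl | hx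
    · have := List.sum_le_sum hl
      omega
    · have := ih hx hl
      omega

theorem laRecord_term_le [DecidableEq S] (M : S × ℕ → Option LaVal) (q : S) (i : ℕ) (r : LaResult)
    (p : S × ℕ) (c : ℕ) :
    (if M p = none then 0 else c) ≤ (if laRecord M q i r p = none then 0 else c) := by
  unfold laRecord
  by_cases h : p = (q, i)
  · rw [if_pos h]
    split <;> simp
  · rw [if_neg h]

theorem pot_record_mono [DecidableEq S] (A : SubNFA Sigma S) (w : List Sigma)
    (M : S × ℕ → Option LaVal) (q : S) (i : ℕ) (r : LaResult) :
    pot A w M ≤ pot A w (laRecord M q i r) :=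
  List.sum_le_sum fun _ _ => Finset.sum_le_sum fun _ _ => laRecord_term_le _ _ _ _ _ _

theorem pot_record [DecidableEq S] (A B : SubNFA Sigma S) (w : List Sigma)
    (M : S × ℕ → Option LaVal) (q : S) (i : ℕ) (r : LaResult) (hB : B ∈ A.comps) (hq : q ∈ B.Q)
    (hF : q ∉ B.F) (hi : i ≤ w.length) (hM : M (q, i) = none) :
    pot A w M + (B.T q).out ≤ pot A w (laRecord M q i r) := by
  refine sum_add_le _ _ _ (q, B.T q) _ ((A.mem_allTransNF _).2 ⟨B, hB, hq, hF, rfl⟩)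
    (fun _ _ => Finset.sum_le_sum fun _ _ => laRecord_term_le _ _ _ _ _ _) ?_
  have hmem : i ∈ Finset.range (w.length + 1) := by simp; omega
  rw [← Finset.add_sum_erase _ _ hmem, ← Finset.add_sum_erase _ _ hmem]
  have h1 : ∑ j ∈ (Finset.range (w.length + 1)).erase i,
      (if M (q, j) = none then 0 else (B.T q).out) ≤
      ∑ j ∈ (Finset.range (w.length + 1)).erase i,
      (if laRecord M q i r (q, j) = none then 0 else (B.T q).out) :=
    Finset.sum_le_sum fun _ _ => laRecord_term_le _ _ _ _ _ _
  have h2 : laRecord M q i r (q, i) ≠ none := by simp [laRecord]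
  simp only [hM, h2, if_true, if_false]
  omega

theorem pot_le [DecidableEq S] (A : SubNFA Sigma S) (w : List Sigma) (M : S × ℕ → Option LaVal) :
    pot A w M ≤ (A.allTransNF.map (fun p => p.2.out)).sum * (w.length + 1) := by
  rw [← List.sum_map_mul_right]
  refine List.sum_le_sum fun p _ => ?_
  calc _ ≤ ∑ i ∈ Finset.range (w.length + 1), p.2.out :=
        Finset.sum_le_sum fun _ _ => by split <;> simp
    _ = _ := by simp [mul_comm]

theorem pot_empty [DecidableEq S] (A : SubNFA Sigma S) (w : List Sigma) :
    pot A w (fun _ => none) = 0 := by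
  simp [pot]

/-! ## The termination measure -/

open Classical in
/-- The number of states reachable by a non-empty sequence of ε-steps. -/
noncomputable def epsRank (A : SubNFA Sigma S) (q : S) : ℕ :=
  (A.allStates.toFinset.filter fun q' => Relation.TransGen A.epsStep q q').card

theorem epsRank_lt (A : SubNFA Sigma S) (hLoop : A.NoEpsLoops) (q q' : S)
    (h : A.epsStep q q') (hq' : q' ∈ A.allStates) : epsRank A q' < epsRank A q := by
  classical
  unfold epsRank
  apply Finset.card_lt_card
  rw [Finset.ssubset_iff_of_subset]
  · refine ⟨q', ?_, ?_⟩
    · simpa [hq'] using Relation.TransGen.single h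
    · simpa using fun _ => hLoop q'
  · intro x
    simp only [Finset.mem_filter]
    rintro ⟨h1, h2⟩
    exact ⟨h1, Relation.TransGen.head h h2⟩

/-- The lexicographic termination measure. -/
noncomputable def meas (A : SubNFA Sigma S) (w : List Sigma) (B : SubNFA Sigma S) (q : S)
    (i : ℕ) : ℕ ×ₗ ℕ ×ₗ ℕ :=
  toLex (B.comps.length, toLex (w.length - i, epsRank A q))

theorem meas_eps (A : SubNFA Sigma S) (w : List Sigma) (B : SubNFA Sigma S) (q q' : S)
    (i : ℕ) (h : epsRank A q' < epsRank A q) : meas A w B q' i < meas A w B q i := by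
  simp [meas, Prod.Lex.toLex_lt_toLex, h]

theorem meas_char (A : SubNFA Sigma S) (w : List Sigma) (B : SubNFA Sigma S) (q q' : S)
    (i : ℕ) (h : i < w.length) : meas A w B q' (i + 1) < meas A w B q i := by
  simp only [meas, Prod.Lex.toLex_lt_toLex]
  right; refine ⟨trivial, Or.inl ?_⟩; omega

theorem meas_sub (A : SubNFA Sigma S) (w : List Sigma) (B B' : SubNFA Sigma S) (q q' : S)
    (i : ℕ) (h : B'.comps.length < B.comps.length) : meas A w B' q' i < meas A w B q i := by
  simp only [meas, Prod.Lex.toLex_lt_toLex]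
  exact Or.inl h

/-- The table entry `p` has measure at most `m`. -/
def Low (A : SubNFA Sigma S) (w : List Sigma) (m : ℕ ×ₗ ℕ ×ₗ ℕ) (p : S × ℕ) : Prop :=
  ∃ B ∈ A.comps, p.1 ∈ B.Q ∧ meas A w B p.1 p.2 ≤ m

/-- The specification of a terminating call. -/
structure Good [DecidableEq S] (A : SubNFA Sigma S) (w : List Sigma) (B : SubNFA Sigma S)
    (q : S) (i : ℕ) (M M' : S × ℕ → Option LaVal) (r : LaResult) (s : List (LaRunElem S)) :
    Prop where
  run : MemoLaRun w B q i M M' r s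
  low : ∀ p, M p = none → M' p ≠ none → Low A w (meas A w B q i) p
  cost : callCount LaRunElem.isCall s + pot A w M ≤ 1 + pot A w M'

theorem Good.keep [DecidableEq S] {A : SubNFA Sigma S} {w : List Sigma} {B C : SubNFA Sigma S}
    {q q' : S} {i i' : ℕ} {M M' : S × ℕ → Option LaVal} {r : LaResult} {s : List (LaRunElem S)}
    (hG : Good A w C q' i' M M' r s) (hWF : A.WF) (hB : B ∈ A.comps) (hq : q ∈ B.Q)
    (hlt : meas A w C q' i' < meas A w B q i) (hM : M (q, i) = none) : M' (q, i) = none := by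
  by_contra hc
  obtain ⟨B', hB', hq', hle⟩ := hG.low _ hM hc
  have := A.comp_unique B B' hWF q hB hB' hq hq'
  subst this
  exact absurd (hle.trans_lt hlt) (lt_irrefl _)

theorem Good.low_lt [DecidableEq S] {A : SubNFA Sigma S} {w : List Sigma} {C : SubNFA Sigma S}
    {q' : S} {i' : ℕ} {M M' : S × ℕ → Option LaVal} {r : LaResult} {s : List (LaRunElem S)}
    (hG : Good A w C q' i' M M' r s) {m : ℕ ×ₗ ℕ ×ₗ ℕ} (hlt : meas A w C q' i' < m) :
    ∀ p, M p = none → M' p ≠ none → Low A w m p := by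
  intro p h1 h2
  obtain ⟨B', hB', hq', hle⟩ := hG.low p h1 h2
  exact ⟨B', hB', hq', hle.trans hlt.le⟩

theorem low_record [DecidableEq S] {A : SubNFA Sigma S} {w : List Sigma} {B : SubNFA Sigma S}
    {q : S} {i : ℕ} {M M' : S × ℕ → Option LaVal} {r : LaResult} (hB : B ∈ A.comps)
    (hq : q ∈ B.Q) (h : ∀ p, M p = none → M' p ≠ none → Low A w (meas A w B q i) p) :
    ∀ p, M p = none → laRecord M' q i r p ≠ none → Low A w (meas A w B q i) p := by
  intro p h1 h2
  by_cases hp : p = (q, i)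
  · subst hp; exact ⟨B, hB, hq, le_rfl⟩
  · simp only [laRecord, hp, if_false] at h2
    exact h p h1 h2

theorem low_trans [DecidableEq S] {A : SubNFA Sigma S} {w : List Sigma}
    {m : ℕ ×ₗ ℕ ×ₗ ℕ} {M M1 M2 : S × ℕ → Option LaVal}
    (h1 : ∀ p, M p = none → M1 p ≠ none → Low A w m p)
    (h2 : ∀ p, M1 p = none → M2 p ≠ none → Low A w m p) :
    ∀ p, M p = none → M2 p ≠ none → Low A w m p := by
  intro p ha hb
  by_cases h : M1 p = none
  · exact h2 p h hb
  · exact h1 p ha h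

theorem callCount_wrap (q : S) (i : ℕ) (s : List (LaRunElem S)) (r : LaResult) :
    callCount LaRunElem.isCall (LaRunElem.call q i :: s ++ [r.elem]) =
      callCount LaRunElem.isCall s + 1 := by
  cases r <;> simp [callCount, List.filter_cons, LaRunElem.isCall, LaResult.elem]

theorem callCount_wrap2 (q : S) (i : ℕ) (s s' : List (LaRunElem S)) (r : LaResult) :
    callCount LaRunElem.isCall (LaRunElem.call q i :: s ++ s' ++ [r.elem]) =
      callCount LaRunElem.isCall s + callCount LaRunElem.isCall s' + 1 := by
  cases r <;> simp [callCount, List.filter_cons, LaRunElem.isCall, LaResult.elem]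

/-- One child call. -/
theorem Good.one [DecidableEq S] {A : SubNFA Sigma S} {w : List Sigma} {B C : SubNFA Sigma S}
    {q q' : S} {i i' : ℕ} {M M' : S × ℕ → Option LaVal} {r r' : LaResult}
    {s : List (LaRunElem S)}
    (hG : Good A w C q' i' M M' r s) (hWF : A.WF) (hB : B ∈ A.comps) (hq : q ∈ B.Q)
    (hF : q ∉ B.F) (hi : i ≤ w.length)
    (hlt : meas A w C q' i' < meas A w B q i) (hM : M (q, i) = none) (ho : 1 ≤ (B.T q).out)
    (hrun : MemoLaRun w B q i M (laRecord M' q i r') r' (.call q i :: s ++ [r'.elem])) :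
    Good A w B q i M (laRecord M' q i r') r' (.call q i :: s ++ [r'.elem]) := by
  refine ⟨hrun, low_record hB hq (hG.low_lt hlt), ?_⟩
  have h1 := pot_record A B w M' q i r' hB hq hF hi (hG.keep hWF hB hq hlt hM)
  have h2 := hG.cost
  rw [callCount_wrap]
  omega

/-- Two child calls. -/
theorem Good.two [DecidableEq S] {A : SubNFA Sigma S} {w : List Sigma} {B C D : SubNFA Sigma S}
    {q q' q'' : S} {i i' i'' : ℕ} {M M1 M2 : S × ℕ → Option LaVal} {r1 r2 r' : LaResult}
    {s1 s2 : List (LaRunElem S)}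
    (hG : Good A w C q' i' M M1 r1 s1) (hG2 : Good A w D q'' i'' M1 M2 r2 s2)
    (hWF : A.WF) (hB : B ∈ A.comps) (hq : q ∈ B.Q)
    (hF : q ∉ B.F) (hi : i ≤ w.length)
    (hlt : meas A w C q' i' < meas A w B q i) (hlt2 : meas A w D q'' i'' < meas A w B q i)
    (hM : M (q, i) = none) (ho : 2 ≤ (B.T q).out)
    (hrun : MemoLaRun w B q i M (laRecord M2 q i r') r' (.call q i :: s1 ++ s2 ++ [r'.elem])) :
    Good A w B q i M (laRecord M2 q i r') r' (.call q i :: s1 ++ s2 ++ [r'.elem]) := by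
  refine ⟨hrun, low_record hB hq (low_trans (hG.low_lt hlt) (hG2.low_lt hlt2)), ?_⟩
  have h1 := pot_record A B w M2 q i r' hB hq hF hi
    (hG2.keep hWF hB hq hlt2 (hG.keep hWF hB hq hlt hM))
  have h2 := hG.cost
  have h3 := hG2.cost
  rw [callCount_wrap2]
  omega

theorem exists_good [DecidableEq S] (A : SubNFA Sigma S) (hWF : A.WF) (hLa : A.IsLaNFA)
    (hLoop : A.NoEpsLoops) (w : List Sigma) (m : ℕ ×ₗ ℕ ×ₗ ℕ) :
    ∀ (B : SubNFA Sigma S) (q : S) (i : ℕ) (M : S × ℕ → Option LaVal), meas A w B q i = m →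
      B ∈ A.comps → q ∈ B.Q → i ≤ w.length → ∃ M' r s, Good A w B q i M M' r s := by
  induction m using WellFoundedLT.induction with
  | _ m ih =>
    intro B q i M hm hB hq hi
    subst hm
    have IH : ∀ (C : SubNFA Sigma S) (q' : S) (i' : ℕ) (M : S × ℕ → Option LaVal),
        meas A w C q' i' < meas A w B q i → C ∈ A.comps → q' ∈ C.Q → i' ≤ w.length →
        ∃ M' r s, Good A w C q' i' M M' r s :=
      fun C q' i' M hlt => ih _ hlt C q' i' M rfl
    clear ih
    cases hM : M (q, i) with
    | some v =>
      refine ⟨M, _, _, .memoHit hM, fun p h1 h2 => absurd h1 h2, ?_⟩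
      cases v <;> simp [callCount, List.filter_cons, LaRunElem.isCall, LaResult.elem, LaVal.toResult]
    | none =>
    by_cases hF : q ∈ B.F
    · refine ⟨_, _, _, .accept hM hF, low_record hB hq (fun p h1 h2 => absurd h1 h2), ?_⟩
      have := pot_record_mono A w M q i (.successAt i)
      simp [callCount, List.filter_cons, LaRunElem.isCall]
      omega
    have hok := (hWF.1 B hB).2.2 q hq hF
    have hrank : ∀ q', q' ∈ B.Q → (B.T q = SubTrans.eps q' ∨
        (∃ q'', B.T q = SubTrans.branch q' q'') ∨
        (∃ q'', B.T q = SubTrans.branch q'' q') ∨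
        (∃ k A'', B.T q = SubTrans.sub k A'' q' ∧ k ≠ Kind.at)) →
        meas A w B q' i < meas A w B q i := fun q' hq' h =>
      meas_eps A w B q q' i
        (epsRank_lt A hLoop q q' ⟨B, hB, hq, hF, h⟩ (A.mem_allStates B q' hB hq'))
    cases hT : B.T q with
    | eps q' =>
      rw [hT] at hok
      have hlt := hrank q' hok (Or.inl hT)
      obtain ⟨M', r, s, hG⟩ := IH B q' i M hlt hB hok hi
      exact ⟨_, _, _, hG.one hWF hB hq hF hi hlt hM (by simp [hT, SubTrans.out])
        (.eps hM hF hT hG.run)⟩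
    | branch q' q'' =>
      rw [hT] at hok
      have hlt := hrank q' hok.1 (Or.inr (Or.inl ⟨_, hT⟩))
      have hlt2 := hrank q'' hok.2 (Or.inr (Or.inr (Or.inl ⟨_, hT⟩)))
      obtain ⟨M1, r1, s1, hG⟩ := IH B q' i M hlt hB hok.1 hi
      by_cases hr : r1 = .failure
      · subst hr
        obtain ⟨M2, r2, s2, hG2⟩ := IH B q'' i M1 hlt2 hB hok.2 hi
        exact ⟨_, _, _, hG.two hG2 hWF hB hq hF hi hlt hlt2 hM (by simp [hT, SubTrans.out])
          (.branchFail hM hF hT hG.run hG2.run)⟩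
      · exact ⟨_, _, _, hG.one hWF hB hq hF hi hlt hM (by simp [hT, SubTrans.out])
          (.branchNoFail hM hF hT hG.run hr)⟩
    | char σ q' =>
      rw [hT] at hok
      by_cases hw : w[i]? = some σ
      · have hi' : i < w.length := by
          obtain ⟨h, _⟩ := List.getElem?_eq_some_iff.1 hw
          exact h
        have hlt := meas_char A w B q q' i hi'
        obtain ⟨M', r, s, hG⟩ := IH B q' (i + 1) M hlt hB hok hi'
        exact ⟨_, _, _, hG.one hWF hB hq hF hi hlt hM (by simp [hT, SubTrans.out])
          (.charSucc hM hF hT hw hG.run)⟩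
      · refine ⟨_, _, _, .charFail hM hF hT hw,
          low_record hB hq (fun p h1 h2 => absurd h1 h2), ?_⟩
        have := pot_record_mono A w M q i .failure
        simp [callCount, List.filter_cons, LaRunElem.isCall]
        omega
    | sub k A' q' =>
      have hk : k = Kind.pla := by
        apply hLa
        refine List.mem_flatMap.2 ⟨B, hB, List.mem_filterMap.2 ⟨q, ?_, ?_⟩⟩
        · simp [hq, hF]
        · simp [hT]
      subst hk
      rw [hT] at hok
      have hA' := A.sub_mem_comps B A' q q' _ hB hq hT
      have hlt := meas_sub A w B A' q A'.q0 i (B.sub_comps_lt A' q q' _ hq hT)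
      have hlt2 := hrank q' hok (Or.inr (Or.inr (Or.inr ⟨_, _, hT, by decide⟩)))
      obtain ⟨M1, r1, s1, hG⟩ := IH A' A'.q0 i M hlt hA' (hWF.1 A' hA').1 hi
      by_cases hr : r1 = .failure
      · subst hr
        exact ⟨_, _, _, hG.one (r' := .failure) hWF hB hq hF hi hlt hM
          (by simp [hT, SubTrans.out]) (.plaFail hM hF hT hG.run)⟩
      · obtain ⟨M2, r2, s2, hG2⟩ := IH B q' i M1 hlt2 hB hok hi
        exact ⟨_, _, _, hG.two hG2 hWF hB hq hF hi hlt hlt2 hM (by simp [hT, SubTrans.out])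
          (.plaSucc hM hF hT hG.run hr hG2.run)⟩

/-- **Theorem 3** (linear-time complexity of `Memo-la`): for every la-NFA `A`, every
input string `w`, and every position `i ∈ {0, …, |w|}`, the call
`Memo-la^{M0}_{A,w}(q0, i)` terminates, and the total number of recursive calls it
makes is at most `#in(A) · |P| · (|w| + 1)`. -/
theorem memoLa_linear_time {Sigma S : Type} [DecidableEq S]
    (A : SubNFA Sigma S) (hWF : A.WF) (hLa : A.IsLaNFA) (hLoop : A.NoEpsLoops)
    (w : List Sigma) (i : ℕ) (hi : i ≤ w.length) :
    ∃ (M' : S × ℕ → Option LaVal) (r : LaResult) (s : List (LaRunElem S)),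
      MemoLaRun w A A.q0 i (fun _ => none) M' r s ∧
        callCount LaRunElem.isCall s ≤ A.inDegMax * A.allStates.length * (w.length + 1) := by
  obtain ⟨M', r, s, hG⟩ := exists_good A hWF hLa hLoop w _ A A.q0 i (fun _ => none) rfl
    A.self_mem_comps (hWF.1 A A.self_mem_comps).1 hi
  refine ⟨M', r, s, hG.run, ?_⟩
  have h1 := hG.cost
  rw [pot_empty] at h1
  have h2 := pot_le A w M'
  have h3 := A.sum_inDeg hWF
  have h4 : (A.allStates.map A.inDeg).sum ≤ A.inDegMax * A.allStates.length :=
    sum_le_length_mul_max _ _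
  have h5 := Nat.mul_le_mul_right (w.length + 1) (h3.trans h4)
  rw [Nat.add_mul] at h5
  omega

end RegexMemo
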